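/- arXiv:1310.2386 — 2 statements merged into one kernel-verified Lean document; each statement's English description precedes it below -/
import Mathlib

section
/- Let γ be a real number with 1 < γ ≤ 3, and let p_c, p_d, p_s be nonnegative reals with p_c + p_d + p_s = 1. Let D_av^C, D_av^D, D_max, D_av be nonnegative reals such that D_av^C ≤ D_av^D, D_max ≤ D_av^D, and D_av = (1/γ)·D_av^C + (1 − 1/γ)·D_av^D. Then p_c·D_av^C + p_d·D_av^D + p_s·(γ·D_av + (3−γ)·D_max) ≤ max{ 1 + 2·p_s , (1 + p_s − p_c)/(1 − 1/γ) } · D_av. -/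
/-!
Since `γ * Dav = DavC + (γ - 1) * DavD` and `Dmax ≤ DavD`, the left-hand side is at most
`(pc + ps) * DavC + (1 + ps - pc) * DavD`, which equals
`(1 + 2 * ps) * DavC + (1 + ps - pc) * (DavD - DavC)`. Likewise
`Dav = DavC + (1 - 1 / γ) * (DavD - DavC)`, so the bound follows by comparing coefficients of the
nonnegative quantities `DavC` and `DavD - DavC`: the two arguments of the maximum are exactly the
ratios of these coefficients.
-/

/-- Core inequality bounding the expected connection and penalty cost of a single run of
the LP-rounding algorithm with scaling parameter `γ` for k-level UFL with penalties. -/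
theorem stmt_1 (γ pc pd ps DavC DavD Dmax Dav : ℝ)
    (hγ1 : 1 < γ) (hγ3 : γ ≤ 3)
    (hpc : 0 ≤ pc) (hpd : 0 ≤ pd) (hps : 0 ≤ ps) (hsum : pc + pd + ps = 1)
    (hDavC : 0 ≤ DavC) (hDavD : 0 ≤ DavD) (hDmax : 0 ≤ Dmax) (hDav : 0 ≤ Dav)
    (h1 : DavC ≤ DavD) (h2 : Dmax ≤ DavD)
    (havg : Dav = (1 / γ) * DavC + (1 - 1 / γ) * DavD) :
    pc * DavC + pd * DavD + ps * (γ * Dav + (3 - γ) * Dmax)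
      ≤ max (1 + 2 * ps) ((1 + ps - pc) / (1 - 1 / γ)) * Dav := by
  have ht : 0 < 1 - 1 / γ := by
    have : 1 / γ < 1 := by rw [div_lt_one (by linarith)]; exact hγ1
    linarith
  have hγDav : γ * Dav = DavC + (γ - 1) * DavD := by
    have : γ ≠ 0 := by linarith
    rw [havg]
    field_simp
  have hDav' : Dav = DavC + (1 - 1 / γ) * (DavD - DavC) := by rw [havg]; ring
  set M := max (1 + 2 * ps) ((1 + ps - pc) / (1 - 1 / γ))
  have hM1 : 1 + 2 * ps ≤ M := le_max_left _ _
  have hM2 : 1 + ps - pc ≤ M * (1 - 1 / γ) := (div_le_iff₀ ht).1 (le_max_right _ _)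
  have hmax : ps * ((3 - γ) * Dmax) ≤ ps * ((3 - γ) * DavD) :=
    mul_le_mul_of_nonneg_left (mul_le_mul_of_nonneg_left h2 (by linarith)) hps
  have hpd' : pd = 1 - pc - ps := by linarith
  calc pc * DavC + pd * DavD + ps * (γ * Dav + (3 - γ) * Dmax)
      ≤ pc * DavC + pd * DavD + ps * (γ * Dav + (3 - γ) * DavD) := by linarith
    _ = (1 + 2 * ps) * DavC + (1 + ps - pc) * (DavD - DavC) := by
        rw [hγDav, hpd']; ring
    _ ≤ M * DavC + M * (1 - 1 / γ) * (DavD - DavC) :=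
        add_le_add (mul_le_mul_of_nonneg_right hM1 hDavC)
          (mul_le_mul_of_nonneg_right hM2 (sub_nonneg.2 h1))
    _ = M * Dav := by rw [hDav']; ring
end

section
/- Let k ≥ 1 be an integer and c a real number with 0 ≤ c < 1. If F_k(x) ≥ 1 − e^{(c−1)x} for all x ≥ 0, then F_{k+1}(x) ≥ 1 − e^{(e^{c−1}−1)x} for all x ≥ 0. -/
/-!
Only the value of the hypothesis at `x = 1` matters. Rescaling a splitting of `z` by `1 / z` gives
a splitting of total flow `1`, so `F k 1 ≥ 1 - e^{c-1}` bounds every element of the set whose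
infimum defines `f (k + 1) z`; hence `f (k + 1) z ≥ z (1 - e^{c-1})` on `(0, 1]`
(`le_f_succ_of_le_F_one`). Multiplying over the pieces of a splitting of `x` and using
`1 - t ≤ e^{-t}` bounds every product `∏ (1 - f (k + 1) xᵢ)` by `e^{(e^{c-1} - 1) x}`.

The bounds `0 ≤ f k ≤ 1` on `[0, 1]` (`f_mem_Icc`) make the factors nonnegative and
the sets in the definitions of `f` and `F` bounded, so that their infima and suprema are genuine.
-/

open scoped BigOperators

/-- `f k z` lower-bounds the probability that the randomized tree-rounding procedure on a
`k`-level tree opens at least one root-to-leaf path when a client sends flow `z` to that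
tree: `f 1 z = z`, and for `k ≥ 2` and `z ≠ 0`,
`f k z = z · inf { 1 - ∏ (1 - f (k-1) (zᵢ/z)) : n ≥ 1, zᵢ > 0, ∑ zᵢ = z }`. -/
noncomputable def f : ℕ → ℝ → ℝ
  | 0, _ => 0
  | 1, z => z
  | (k + 2), z =>
      if z = 0 then 0
      else z * sInf { t : ℝ | ∃ (n : ℕ) (zs : Fin n → ℝ), 0 < n ∧ (∀ i, 0 < zs i) ∧
            (∑ i, zs i) = z ∧ t = 1 - ∏ i, (1 - f (k + 1) (zs i / z)) }

/-- `F k x` lower-bounds the probability that at least one path opens when a client sends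
total flow `x`, split among several `k`-level trees:
`F k x = 1 - sup { ∏ (1 - f k xᵢ) : n ≥ 1, xᵢ ∈ (0,1], ∑ xᵢ = x }`, with `F k 0 = 0`. -/
noncomputable def F (k : ℕ) (x : ℝ) : ℝ :=
  if x = 0 then 0
  else 1 - sSup { t : ℝ | ∃ (n : ℕ) (xs : Fin n → ℝ), 0 < n ∧
        (∀ i, xs i ∈ Set.Ioc (0 : ℝ) 1) ∧ (∑ i, xs i) = x ∧
        t = ∏ i, (1 - f k (xs i)) }

/-- The normalized pieces of a splitting of `z` lie in `(0, 1]`. -/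
lemma div_mem_Ioc_of_sum_eq {n : ℕ} {zs : Fin n → ℝ} {z : ℝ} (hz : 0 < z)
    (hpos : ∀ i, 0 < zs i) (hsum : ∑ i, zs i = z) (i : Fin n) :
    zs i / z ∈ Set.Ioc (0 : ℝ) 1 := by
  refine ⟨div_pos (hpos i) hz, (div_le_one hz).2 ?_⟩
  rw [← hsum]
  exact Finset.single_le_sum (fun j _ => (hpos j).le) (Finset.mem_univ i)

lemma prod_one_sub_mem_Icc {n : ℕ} {g : Fin n → ℝ} (hg : ∀ i, g i ∈ Set.Icc (0 : ℝ) 1) :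
    ∏ i, (1 - g i) ∈ Set.Icc (0 : ℝ) 1 :=
  ⟨Finset.prod_nonneg fun i _ => sub_nonneg.2 (hg i).2,
    Finset.prod_le_one (fun i _ => sub_nonneg.2 (hg i).2) fun i _ => sub_le_self _ (hg i).1⟩

lemma f_mem_Icc (k : ℕ) : ∀ z ∈ Set.Icc (0 : ℝ) 1, f k z ∈ Set.Icc (0 : ℝ) 1 := by
  induction k with
  | zero => intro z _; simp [f]
  | succ k ih =>
    intro z hz
    rcases k with _ | k
    · simpa [f] using hz
    · rcases eq_or_lt_of_le hz.1 with h0 | h0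
      · simp [f, ← h0]
      · rw [f, if_neg h0.ne']
        set S := { t : ℝ | ∃ (n : ℕ) (zs : Fin n → ℝ), 0 < n ∧ (∀ i, 0 < zs i) ∧
            (∑ i, zs i) = z ∧ t = 1 - ∏ i, (1 - f (k + 1) (zs i / z)) } with hS
        have hmem : ∀ t ∈ S, t ∈ Set.Icc (0 : ℝ) 1 := by
          rintro t ⟨n, zs, -, hpos, hsum, rfl⟩
          have h := prod_one_sub_mem_Icc fun i =>
            ih _ (Set.Ioc_subset_Icc_self (div_mem_Ioc_of_sum_eq h0 hpos hsum i))
          exact ⟨sub_nonneg.2 h.2, sub_le_self _ h.1⟩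
        -- the splitting into a single piece
        have hne : S.Nonempty := ⟨_, 1, fun _ => z, one_pos, fun _ => h0, by simp, rfl⟩
        have hlo : 0 ≤ sInf S := Real.sInf_nonneg fun t ht => (hmem t ht).1
        have hhi : sInf S ≤ 1 :=
          (csInf_le ⟨0, fun t ht => (hmem t ht).1⟩ hne.some_mem).trans (hmem _ hne.some_mem).2
        exact ⟨mul_nonneg hz.1 hlo, mul_le_one₀ hz.2 hlo hhi⟩

/-- Since `F k 1` is one minus the supremum of the products over splittings of `1`, any lower
bound `a` for it bounds the infimum in the definition of `f (k + 1) z` from below. -/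
lemma le_f_succ_of_le_F_one {k : ℕ} (hk : 1 ≤ k) {a : ℝ} (ha : a ≤ F k 1) {z : ℝ}
    (hz : 0 < z) : z * a ≤ f (k + 1) z := by
  obtain ⟨k, rfl⟩ := Nat.exists_eq_add_of_le' hk
  rw [f, if_neg hz.ne']
  refine mul_le_mul_of_nonneg_left (le_csInf ?_ ?_) hz.le
  · exact ⟨_, 1, fun _ => z, one_pos, fun _ => hz, by simp, rfl⟩
  · rintro t ⟨n, zs, hn, hpos, hsum, rfl⟩
    rw [F, if_neg one_ne_zero] at ha
    refine ha.trans (sub_le_sub_left (le_csSup ⟨1, ?_⟩ ?_) 1)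
    · rintro t ⟨m, xs, -, hxs, -, rfl⟩
      exact (prod_one_sub_mem_Icc fun i =>
        f_mem_Icc _ _ (Set.Ioc_subset_Icc_self (hxs i))).2
    · exact ⟨n, fun i => zs i / z, hn, div_mem_Ioc_of_sum_eq hz hpos hsum,
        by rw [← Finset.sum_div, hsum, div_self hz.ne'], rfl⟩

/-- Inductive step: if `F k x ≥ 1 - e^{(c-1)x}` for all `x ≥ 0` (with `0 ≤ c < 1`), then
`F (k+1) x ≥ 1 - e^{(e^{c-1}-1)x}` for all `x ≥ 0`. -/
theorem stmt_2 (k : ℕ) (hk : 1 ≤ k) (c : ℝ) (hc0 : 0 ≤ c) (hc1 : c < 1)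
    (hFk : ∀ x : ℝ, 0 ≤ x → 1 - Real.exp ((c - 1) * x) ≤ F k x) :
    ∀ x : ℝ, 0 ≤ x → 1 - Real.exp ((Real.exp (c - 1) - 1) * x) ≤ F (k + 1) x := by
  intro x _
  have h1 : 1 - Real.exp (c - 1) ≤ F k 1 := by simpa using hFk 1 zero_le_one
  rw [F]
  split_ifs with hx0
  · simp [hx0]
  -- `Real.sSup_le` also covers an empty set, whose supremum is `0`.
  refine sub_le_sub_left (Real.sSup_le ?_ (Real.exp_pos _).le) 1
  rintro t ⟨n, xs, -, hxs, hsum, rfl⟩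
  rw [← hsum, Finset.mul_sum, Real.exp_sum]
  refine Finset.prod_le_prod
    (fun i _ => sub_nonneg.2 (f_mem_Icc _ _ (Set.Ioc_subset_Icc_self (hxs i))).2) fun i _ => ?_
  have hf := le_f_succ_of_le_F_one hk h1 (hxs i).1
  have he := Real.add_one_le_exp ((Real.exp (c - 1) - 1) * xs i)
  linarith
end
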